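/- There exists a totally disconnected Tychonoff space T such that C_p(T, [0,1]) is a Baire space but C_p(T, {0,1}) is not a Baire space. -/

import Mathlib

open Set Topology

/-- `Cp X Y` : continuous functions from `X` to `Y` with the topology of pointwise
convergence, i.e. the subspace topology inherited from the product space `Y^X`. -/
abbrev Cp (X Y : Type*) [TopologicalSpace X] [TopologicalSpace Y] : Type _ :=
  {f : X → Y // Continuous f}

/-!
The points of `T` form a subset of `(Bool × Y) ^ κ` meeting every face that fixes only countably
many coordinates. Continuous maps from such a subset to a compact Hausdorff space extend to the
whole product, and a map from the product to `Bool` ignores the `Y`-parts because `Y` is connected.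
So if the Boolean parts of an injective sequence in `T` converge, then every continuous
`f : T → Bool` is eventually constant along the sequence. As `T` is totally separated, the `f` that
change value infinitely often along the sequence form a countable intersection of dense open sets,
which would be nonempty if `Cp T Bool` were Baire. On the other hand, if the `Y`-valued coordinates
of `T` realise every countable partial function from `T` to `Y`, then `Cp T Y` meets every countable
face of the Baire space `Y ^ T` and inherits its Baire property.

Both `T` and `κ` have the cardinality of the continuum, as have the countable partial functions on
them. Hence every point can be made to code a countable partial function on the coordinates, and
every coordinate one on the points, each code being used uncountably often. The requirements, each
involving only countable sets, can then be met by a point or coordinate that interferes with none of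
the others.
-/

open Filter Function Cardinal

section ProductCoordinates

variable {ι : Type*} {Y : ι → Type*} [∀ i, TopologicalSpace (Y i)]

lemma exists_finset_forall_mem_of_isOpen {U : Set (∀ i, Y i)} (hU : IsOpen U) {p : ∀ i, Y i}
    (hp : p ∈ U) : ∃ S : Finset ι, ∀ q : ∀ i, Y i, (∀ i ∈ S, q i = p i) → q ∈ U := by
  obtain ⟨S, u, hu, hSU⟩ := isOpen_pi_iff.1 hU p hp
  refine ⟨S, fun q hq => hSU fun i hi => ?_⟩
  rw [hq i hi]
  exact (hu i hi).2

lemma exists_countable_forall_mem_of_isGδ {s : Set (∀ i, Y i)} (hs : IsGδ s) {p : ∀ i, Y i}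
    (hp : p ∈ s) :
    ∃ C : Set ι, C.Countable ∧ ∀ q : ∀ i, Y i, (∀ i ∈ C, q i = p i) → q ∈ s := by
  obtain ⟨U, hU, rfl⟩ := hs.eq_iInter_nat
  choose S hS using fun n => exists_finset_forall_mem_of_isOpen (hU n) (mem_iInter.1 hp n)
  exact ⟨⋃ n, S n, countable_iUnion fun n => (S n).countable_toSet,
    fun q hq => mem_iInter.2 fun n => hS n q fun i hi => hq i (mem_iUnion_of_mem n hi)⟩

lemma exists_countable_forall_mem_closure_of_isOpen [∀ i, FirstCountableTopology (Y i)]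
    {U : Set (∀ i, Y i)} (hU : IsOpen U) {p : ∀ i, Y i} (hp : p ∈ closure U) :
    ∃ C : Set ι, C.Countable ∧ ∀ q : ∀ i, Y i, (∀ i ∈ C, q i = p i) → q ∈ closure U := by
  classical
  choose B hB using fun i => (𝓝 (p i)).exists_antitone_basis
  have exists_approx (F : Finset ι) (n : ℕ) : ∃ u : ∀ i, Y i, (∀ i ∈ F, u i ∈ B i n) ∧
      ∃ S : Finset ι, ∀ r : ∀ i, Y i, (∀ i ∈ S, r i = u i) → r ∈ U := by
    obtain ⟨u, huB, huU⟩ := mem_closure_iff_nhds.1 hp _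
      (set_pi_mem_nhds F.finite_toSet fun i _ => (hB i).mem n)
    exact ⟨u, huB, exists_finset_forall_mem_of_isOpen hU huU⟩
  choose u huB S hS using exists_approx
  -- Feeding each support back into the next approximation makes the points `u (F n) n` of `U`
  -- converge to `p` on the union `C` of their supports, so off `C` they may be replaced by `q`.
  obtain ⟨F, hF, hSF⟩ : ∃ F : ℕ → Finset ι, Monotone F ∧ ∀ n, S (F n) n ⊆ F (n + 1) :=
    ⟨fun n => Nat.rec ∅ (fun m G => G ∪ S G m) n,
      monotone_nat_of_le_succ fun _ => Finset.subset_union_left,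
      fun _ => Finset.subset_union_right⟩
  let C : Set ι := ⋃ n, F n
  refine ⟨C, countable_iUnion fun n => (F n).countable_toSet, fun q hq => ?_⟩
  refine mem_closure_of_tendsto (f := fun n => C.piecewise (u (F n) n) q) (b := atTop)
    (tendsto_pi_nhds.2 fun i => ?_) (Eventually.of_forall fun n => hS (F n) n _ fun i hi =>
      piecewise_eq_of_mem _ _ _ (mem_iUnion_of_mem (n + 1) (hSF n hi)))
  by_cases hi : i ∈ C
  · obtain ⟨m, hm⟩ := mem_iUnion.1 hi
    simp only [piecewise_eq_of_mem _ _ _ hi, hq i hi]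
    refine (hB i).1.tendsto_right_iff.2 fun k _ => ?_
    filter_upwards [eventually_ge_atTop m, eventually_ge_atTop k] with n hmn hkn
    exact (hB i).antitone hkn (huB (F n) n i (hF hmn hm))
  · simp only [piecewise_eq_of_notMem _ _ _ hi, tendsto_const_nhds]

end ProductCoordinates

/-- The family `Φ` of points of the product `∏ k, Y k` realises every prescription of countably
many coordinates, i.e. it meets every nonempty face of the product of countable codimension. -/
def MeetsCountableFaces {T κ : Type*} {Y : κ → Type*} (Φ : T → ∀ k, Y k) : Prop :=
  ∀ C : Set κ, C.Countable → ∀ p : ∀ k, Y k, ∃ t, ∀ k ∈ C, Φ t k = p k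

namespace MeetsCountableFaces

variable {T κ : Type*} {Y : κ → Type*} [∀ k, TopologicalSpace (Y k)] {Φ : T → ∀ k, Y k}

lemma exists_mem_of_isGδ (h : MeetsCountableFaces Φ) {s : Set (∀ k, Y k)} (hs : IsGδ s)
    (hne : s.Nonempty) : ∃ t, Φ t ∈ s := by
  obtain ⟨p, hp⟩ := hne
  obtain ⟨C, hC, hCs⟩ := exists_countable_forall_mem_of_isGδ hs hp
  obtain ⟨t, ht⟩ := h C hC p
  exact ⟨t, hCs _ ht⟩

lemma denseRange (h : MeetsCountableFaces Φ) : DenseRange Φ :=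
  dense_iff_inter_open.2 fun _U hU hne =>
    let ⟨t, ht⟩ := h.exists_mem_of_isGδ hU.isGδ hne
    ⟨Φ t, ht, mem_range_self t⟩

variable [TopologicalSpace T]

lemma baireSpace [BaireSpace (∀ k, Y k)] (h : MeetsCountableFaces Φ) (hΦ : IsInducing Φ) :
    BaireSpace T := by
  refine ⟨fun O hO hOd => dense_iff_inter_open.2 fun W hW hWne => ?_⟩
  choose O' hO' hOO' using fun n => hΦ.isOpen_iff.1 (hO n)
  obtain ⟨W', hW', rfl⟩ := hΦ.isOpen_iff.1 hW
  have hO'd (n : ℕ) : Dense (O' n) :=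
    (h.denseRange.dense_image hΦ.continuous (hOd n)).mono (by
      rw [← hOO' n]
      exact image_preimage_subset _ _)
  have hne : (W' ∩ ⋂ n, O' n).Nonempty := by
    obtain ⟨w, hw⟩ := hWne
    exact (dense_iInter_of_isOpen_nat hO' hO'd).inter_open_nonempty W' hW' ⟨Φ w, hw⟩
  obtain ⟨t, htW, htO⟩ := h.exists_mem_of_isGδ (hW'.isGδ.inter (.iInter_of_isOpen hO')) hne
  refine ⟨t, htW, mem_iInter.2 fun n => ?_⟩
  rw [← hOO' n]
  exact mem_iInter.1 htO n

section Extension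

variable [∀ k, FirstCountableTopology (Y k)] {Z : Type*} [TopologicalSpace Z] {f : T → Z}

lemma exists_countable_forall_mem_closure_of_mapClusterPt (h : MeetsCountableFaces Φ)
    (hΦ : IsInducing Φ) (hf : Continuous f) {p : ∀ k, Y k} {z : Z}
    (hz : MapClusterPt z (comap Φ (𝓝 p)) f) {N : Set Z} (hN : IsOpen N) (hzN : z ∈ N) :
    ∃ C : Set κ, C.Countable ∧ ∀ t, (∀ k ∈ C, Φ t k = p k) → f t ∈ closure N := by
  obtain ⟨U, hU, hUN⟩ := hΦ.isOpen_iff.1 (hN.preimage hf)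
  have hpU : p ∈ closure U := mem_closure_iff_nhds.2 fun W hW => by
    obtain ⟨t, htN, htW⟩ :=
      ((hz.frequently (hN.mem_nhds hzN)).and_eventually (preimage_mem_comap hW)).exists
    exact ⟨Φ t, htW, hUN.ge htN⟩
  obtain ⟨C, hC, hCU⟩ := exists_countable_forall_mem_closure_of_isOpen hU hpU
  refine ⟨C, hC, fun t ht => map_mem_closure hf (s := f ⁻¹' N) ?_ fun _ => id⟩
  rw [hΦ.closure_eq_preimage_closure_image, ← hUN]
  exact closure_minimal (h.denseRange.subset_closure_image_preimage_of_isOpen hU)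
    isClosed_closure (hCU _ ht)

lemma exists_continuous_extension [CompactSpace Z] [T2Space Z] (h : MeetsCountableFaces Φ)
    (hΦ : IsInducing Φ) (hf : Continuous f) :
    ∃ g : (∀ k, Y k) → Z, Continuous g ∧ ∀ t, g (Φ t) = f t := by
  have hdi : IsDenseInducing Φ := ⟨hΦ, h.denseRange⟩
  refine ⟨hdi.extend f, hdi.continuous_extend fun p => ?_, hdi.extend_eq hf⟩
  have := hdi.comap_nhds_neBot p
  obtain ⟨z, hz⟩ := exists_clusterPt_of_compactSpace (map f (comap Φ (𝓝 p)))
  refine ⟨z, tendsto_nhds_of_unique_mapClusterPt fun z' hz' => ?_⟩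
  by_contra hne
  obtain ⟨N', hzN', hN', N, hzN, hN, hdisj⟩ := exists_open_nhds_disjoint_closure hne
  obtain ⟨C, hC, hCN⟩ :=
    h.exists_countable_forall_mem_closure_of_mapClusterPt hΦ hf hz hN hzN
  obtain ⟨C', hC', hCN'⟩ :=
    h.exists_countable_forall_mem_closure_of_mapClusterPt hΦ hf hz' hN' hzN'
  obtain ⟨t, ht⟩ := h (C ∪ C') (hC.union hC') p
  exact disjoint_left.1 hdisj (hCN' t fun k hk => ht k (.inr hk))
    (hCN t fun k hk => ht k (.inl hk))

end Extension

end MeetsCountableFaces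

section Fst

variable {κ : Type*} {A B : κ → Type*} [∀ k, TopologicalSpace (A k)] [∀ k, TopologicalSpace (B k)]
  {Z : Type*} [TopologicalSpace Z] [TotallyDisconnectedSpace Z]

lemma eq_of_continuous_of_forall_fst_eq [∀ k, PreconnectedSpace (B k)] {g : (∀ k, A k × B k) → Z}
    (hg : Continuous g) {p q : ∀ k, A k × B k} (h : ∀ k, (p k).1 = (q k).1) : g p = g q := by
  let fiber (b : ∀ k, B k) : Z := g fun k => ((p k).1, b k)
  have hfiber : Continuous fiber := by fun_prop
  have hq : q = fun k => ((p k).1, (q k).2) := funext fun k => Prod.ext (h k).symm rfl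
  rw [hq]
  exact (isPreconnected_range hfiber).subsingleton
    (mem_range_self fun k => (p k).2) (mem_range_self fun k => (q k).2)

lemma MeetsCountableFaces.exists_continuous_factorization_fst
    [∀ k, FirstCountableTopology (A k)] [∀ k, FirstCountableTopology (B k)]
    [∀ k, ConnectedSpace (B k)] [CompactSpace Z] [T2Space Z] {T : Type*} [TopologicalSpace T]
    {Φ : T → ∀ k, A k × B k} (h : MeetsCountableFaces Φ) (hΦ : IsInducing Φ) {f : T → Z}
    (hf : Continuous f) :
    ∃ g : (∀ k, A k) → Z, Continuous g ∧ ∀ t, f t = g fun k => (Φ t k).1 := by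
  obtain ⟨g, hg, hgf⟩ := h.exists_continuous_extension hΦ hf
  let b (k : κ) : B k := Classical.arbitrary _
  refine ⟨fun a => g fun k => (a k, b k), by fun_prop, fun t => ?_⟩
  rw [← hgf t]
  exact eq_of_continuous_of_forall_fst_eq hg fun _ => rfl

end Fst

lemma totallySeparatedSpace_of_continuous_injective {X X' : Type*} [TopologicalSpace X]
    [TopologicalSpace X'] [TotallySeparatedSpace X'] {f : X → X'} (hf : Continuous f)
    (hinj : Injective f) : TotallySeparatedSpace X :=
  totallySeparatedSpace_iff_exists_isClopen.2 fun _ _ hne =>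
    let ⟨U, hU, hx, hy⟩ := exists_isClopen_of_totally_separated (hinj.ne hne)
    ⟨f ⁻¹' U, hU.preimage hf, hx, hy⟩

lemma eventually_ne_of_injective {X : Type*} {x : ℕ → X} (hx : Injective x) (t : X) :
    ∀ᶠ n in atTop, x n ≠ t :=
  Nat.cofinite_eq_atTop ▸ hx.tendsto_cofinite.eventually (eventually_cofinite_ne t)

lemma dense_setOf_exists_ge_ne {X Z : Type*} [TopologicalSpace Z] [Nontrivial Z] {x : ℕ → X}
    (hx : Injective x) (n : ℕ) : Dense {f : X → Z | ∃ m ≥ n, f (x (m + 1)) ≠ f (x m)} := by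
  classical
  intro p
  choose z hz using fun m => exists_ne (p (x (m + 1)))
  refine mem_closure_of_tendsto (f := fun m => update p (x m) (z m)) (b := atTop)
    (tendsto_pi_nhds.2 fun t => tendsto_const_nhds.congr' ?_) ?_
  · filter_upwards [eventually_ne_of_injective hx t] with m hm
    exact (update_of_ne hm.symm _ _).symm
  · filter_upwards [eventually_ge_atTop n] with m hm
    refine ⟨m, hm, ?_⟩
    rw [update_self, update_of_ne (hx.ne m.succ_ne_self)]
    exact (hz m).symm

section NotBaire

variable {X Z : Type*} [TopologicalSpace X] [TotallySeparatedSpace X]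

lemma exists_isClopen_mem_disjoint_finset {x : X} {S : Finset X} (hx : x ∉ S) :
    ∃ U : Set X, IsClopen U ∧ x ∈ U ∧ ∀ y ∈ S, y ∉ U := by
  have exists_separating (y : X) (hy : y ∈ S) : ∃ U : Set X, IsClopen U ∧ x ∈ U ∧ y ∉ U :=
    exists_isClopen_of_totally_separated fun hxy => hx (hxy ▸ hy)
  choose! U hU hxU hyU using exists_separating
  exact ⟨⋂ y ∈ S, U y, isClopen_biInter_finset hU, mem_iInter₂.2 hxU,
    fun y hy h => hyU y hy (mem_iInter₂.1 h y hy)⟩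

lemma exists_continuous_eq_on_finset [TopologicalSpace Z] [Nonempty Z] (S : Finset X) (p : X → Z) :
    ∃ f : X → Z, Continuous f ∧ ∀ x ∈ S, f x = p x := by
  classical
  induction S using Finset.induction_on with
  | empty => exact ⟨fun _ => Classical.arbitrary Z, continuous_const, by simp⟩
  | insert a S ha ih =>
    obtain ⟨f, hf, hfp⟩ := ih
    obtain ⟨U, hU, haU, hSU⟩ := exists_isClopen_mem_disjoint_finset ha
    refine ⟨U.piecewise (fun _ => p a) f, continuous_const.piecewise (by simp [hU.frontier_eq]) hf,
      (Finset.forall_mem_insert ..).2 ⟨piecewise_eq_of_mem _ _ _ haU, fun x hx => ?_⟩⟩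
    rw [piecewise_eq_of_notMem _ _ _ (hSU x hx), hfp x hx]

lemma denseRange_Cp_val [TopologicalSpace Z] [Nonempty Z] :
    DenseRange (Subtype.val : Cp X Z → X → Z) :=
  dense_iff_inter_open.2 fun U hU ⟨p, hp⟩ => by
    obtain ⟨S, hS⟩ := exists_finset_forall_mem_of_isOpen hU hp
    obtain ⟨f, hf, hfp⟩ := exists_continuous_eq_on_finset S p
    exact ⟨f, hS f hfp, ⟨f, hf⟩, rfl⟩

theorem not_baireSpace_Cp [TopologicalSpace Z] [T2Space Z] [Nontrivial Z] {x : ℕ → X}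
    (hx : Injective x) (hconst : ∀ f : Cp X Z, EventuallyConst (f.1 ∘ x) atTop) :
    ¬ BaireSpace (Cp X Z) := by
  intro _
  let O (n : ℕ) : Set (X → Z) := {f | ∃ m ≥ n, f (x (m + 1)) ≠ f (x m)}
  have hO (n : ℕ) : IsOpen (O n) := by
    simp only [O, ofPred_exists, ← exists_prop]
    exact isOpen_iUnion fun m => isOpen_iUnion fun _ =>
      isOpen_ne_fun (continuous_apply _) (continuous_apply _)
  have hdi : IsDenseInducing (Subtype.val : Cp X Z → X → Z) := ⟨.subtypeVal, denseRange_Cp_val⟩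
  have hOd (n : ℕ) : Dense (Subtype.val ⁻¹' O n : Set (Cp X Z)) := by
    rw [← hdi.dense_image, image_preimage_eq_inter_range]
    exact (dense_setOf_exists_ge_ne hx n).inter_of_isOpen_left denseRange_Cp_val (hO n)
  have : Nonempty (Cp X Z) := ⟨⟨fun _ => Classical.arbitrary Z, continuous_const⟩⟩
  obtain ⟨f, hf⟩ :=
    (dense_iInter_of_isOpen_nat (fun n => (hO n).preimage hdi.continuous) hOd).nonempty
  obtain ⟨n, hn⟩ := eventuallyConst_atTop_nat.1 (hconst f)
  obtain ⟨m, hnm, hm⟩ := mem_iInter.1 hf n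
  exact hm (hn m hnm)

end NotBaire

section Override

variable {X Y : Type*}

/-- The function `d` with its values overridden by the countable partial function whose graph is
listed by `c`. When the listed pairs conflict, an arbitrary one of them is used. -/
noncomputable def override (c : ℕ → X × Y) (d : X → Y) : X → Y :=
  extend (fun n => (c n).1) (fun n => (c n).2) d

lemma override_of_forall_ne {c : ℕ → X × Y} {x : X} (h : ∀ n, (c n).1 ≠ x) (d : X → Y) :
    override c d x = d x :=
  extend_apply' _ _ _ fun ⟨n, hn⟩ => h n hn

lemma exists_override_eqOn [Nonempty X] {C : Set X} (hC : C.Countable) (p : X → Y) :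
    ∃ c : ℕ → X × Y, ∀ d, EqOn (override c d) p C := by
  obtain ⟨a, ha⟩ := countable_iff_exists_subset_range.1 hC
  refine ⟨fun n => (a n, p (a n)), fun d x hx => ?_⟩
  obtain ⟨n, rfl⟩ := ha hx
  have hp : (fun n => p (a n)).FactorsThrough a := fun _ _ h => congrArg p h
  exact hp.extend_apply d n

lemma override_const_eq_or (x₀ : X) (y₀ : Y) (d : X → Y) (x : X) :
    override (fun _ => (x₀, y₀)) d x = y₀ ∨ override (fun _ => (x₀, y₀)) d x = d x := by
  by_cases hx : x₀ = x
  · subst hx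
    exact .inl (FactorsThrough.extend_apply (f := fun _ : ℕ => x₀) (fun _ _ _ => rfl) d 0)
  · exact .inr (override_of_forall_ne (fun _ => hx) d)

end Override

lemma exists_notMem_of_not_countable {X : Type*} {s C : Set X} (hs : ¬ s.Countable)
    (hC : C.Countable) : ∃ x ∈ s, x ∉ C :=
  not_subset.1 fun h => hs (hC.mono h)

section Matrix

variable {T κ Y : Type*} {row : T → ℕ → κ × Bool × Y} {col : κ → T × (ℕ → T × Y)}

open Classical in
/-- The matrix whose row `t` follows the countable partial function listed by `row t`, with two
amendments: where `row t` says nothing, the Boolean entry of column `k` marks the single row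
`(col k).1`; and the `Y`-entries of column `k` are overridden by the countable partial function
listed by `(col k).2`. The rows serve as the points of the counterexample, with the columns as their
coordinates. -/
noncomputable def interpolationMatrix (y₀ : Y) (row : T → ℕ → κ × Bool × Y)
    (col : κ → T × (ℕ → T × Y)) (t : T) (k : κ) : Bool × Y :=
  let entry := override (row t) (fun l => (decide ((col l).1 = t), y₀)) k
  (entry.1, override (col k).2 (fun _ => entry.2) t)

namespace interpolationMatrix

lemma meetsCountableFaces [Nonempty κ] (hrow : ∀ c, ¬ (row ⁻¹' {c}).Countable) (y₀ : Y) :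
    MeetsCountableFaces (interpolationMatrix y₀ row col) := by
  intro C hC p
  obtain ⟨c, hc⟩ := exists_override_eqOn hC p
  obtain ⟨t, rfl, ht⟩ := exists_notMem_of_not_countable (hrow c)
    (hC.biUnion fun k _ => countable_range fun n => ((col k).2 n).1)
  refine ⟨t, fun k hk => ?_⟩
  have ht_free : ∀ n, ((col k).2 n).1 ≠ t := fun n hn => ht (mem_biUnion hk ⟨n, hn⟩)
  simp only [interpolationMatrix, override_of_forall_ne ht_free, hc _ hk]

lemma meetsCountableFaces_snd [Nonempty T] (hcol : Surjective col) (y₀ : Y) :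
    MeetsCountableFaces fun k t => (interpolationMatrix y₀ row col t k).2 := by
  intro A hA p
  obtain ⟨c, hc⟩ := exists_override_eqOn hA p
  obtain ⟨k, hk⟩ := hcol (Classical.arbitrary T, c)
  refine ⟨k, fun t ht => ?_⟩
  simp only [interpolationMatrix, hk, hc _ ht]

lemma injective_fst (hcol : ∀ c, ¬ (col ⁻¹' {c}).Countable) (y₀ : Y) :
    Injective fun t k => (interpolationMatrix y₀ row col t k).1 := by
  intro s t hst
  obtain ⟨k, hk, hfree⟩ := exists_notMem_of_not_countable (hcol (s, fun _ => (s, y₀)))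
    ((countable_range fun n => (row s n).1).union (countable_range fun n => (row t n).1))
  have hs : ∀ n, (row s n).1 ≠ k := fun n hn => hfree (.inl ⟨n, hn⟩)
  have ht : ∀ n, (row t n).1 ≠ k := fun n hn => hfree (.inr ⟨n, hn⟩)
  have hmark : (col k).1 = s := congrArg Prod.fst hk
  have hk_entry := congrFun hst k
  simpa [interpolationMatrix, override_of_forall_ne hs, override_of_forall_ne ht, hmark]
    using hk_entry

lemma tendsto_fst {k₀ : κ} {y₀ : Y} {x : ℕ → T} (hx : Injective x)
    (hrow : ∀ n, row (x n) = fun _ => (k₀, false, y₀)) :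
    Tendsto (fun n k => (interpolationMatrix y₀ row col (x n) k).1) atTop (𝓝 fun _ => false) := by
  classical
  refine tendsto_pi_nhds.2 fun k => tendsto_const_nhds.congr' ?_
  filter_upwards [eventually_ne_of_injective hx (col k).1] with n hn
  simp only [interpolationMatrix, hrow n]
  rcases override_const_eq_or k₀ (false, y₀) (fun l => (decide ((col l).1 = x n), y₀)) k with h | h
  · simp [h]
  · simp [h, hn.symm]

end interpolationMatrix

end Matrix

lemma exists_map_real_uncountable_fibers {D : Type} [Nonempty D] (hD : #D ≤ 𝔠) :
    ∃ e : ℝ → D, ∀ d, ¬ (e ⁻¹' {d}).Countable := by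
  have hcard : #ℝ = #(D × ℝ) := by
    rw [mk_prod, lift_id, lift_id, mk_real, mul_eq_right aleph0_le_continuum hD (mk_ne_zero D)]
  obtain ⟨e⟩ := Cardinal.eq.1 hcard
  refine ⟨fun r => (e r).1, fun d hd => not_countable_univ (α := ℝ) ?_⟩
  refine (hd.preimage_of_injOn (f := fun r => e.symm (d, r)) ?_).mono fun r _ => by simp
  exact fun r _ r' _ h => congrArg Prod.snd (e.symm.injective h)

lemma mk_nat_arrow_le_continuum {D : Type} (hD : #D ≤ 𝔠) : #(ℕ → D) ≤ 𝔠 := by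
  rw [mk_arrow, lift_id, lift_id, mk_nat]
  exact (power_le_power_right hD).trans continuum_power_aleph0.le

lemma mk_prod_le_continuum {D E : Type} (hD : #D ≤ 𝔠) (hE : #E ≤ 𝔠) : #(D × E) ≤ 𝔠 := by
  rw [mk_prod, lift_id, lift_id]
  exact (mul_le_mul' hD hE).trans continuum_mul_self.le

theorem exists_interpolationMatrix (Y : Type) [Nonempty Y] (hY : #Y ≤ 𝔠) :
    ∃ (T κ : Type) (Φ : T → κ → Bool × Y), MeetsCountableFaces Φ ∧
      MeetsCountableFaces (fun k t => (Φ t k).2) ∧ Injective (fun t k => (Φ t k).1) ∧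
      ∃ x : ℕ → T, Injective x ∧ Tendsto (fun n k => (Φ (x n) k).1) atTop (𝓝 fun _ => false) := by
  have hBool : #Bool ≤ 𝔠 := mk_le_aleph0.trans aleph0_le_continuum
  let y₀ : Y := Classical.arbitrary Y
  obtain ⟨row, hrow⟩ := exists_map_real_uncountable_fibers
    (mk_nat_arrow_le_continuum (mk_prod_le_continuum mk_real.le (mk_prod_le_continuum hBool hY)))
  obtain ⟨col, hcol⟩ := exists_map_real_uncountable_fibers (mk_prod_le_continuum mk_real.le
    (mk_nat_arrow_le_continuum (mk_prod_le_continuum mk_real.le hY)))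
  have hcol_surj : Surjective col := fun c => by
    by_contra! h
    exact hcol c (by simp [preimage_singleton_eq_empty.2 (by simpa using h)])
  have hinf : (row ⁻¹' {fun _ => (0, false, y₀)}).Infinite := fun h => hrow _ h.countable
  let x := hinf.natEmbedding
  have hx : Injective fun n => (x n : ℝ) := Subtype.val_injective.comp x.injective
  exact ⟨ℝ, ℝ, interpolationMatrix y₀ row col, interpolationMatrix.meetsCountableFaces hrow y₀,
    interpolationMatrix.meetsCountableFaces_snd hcol_surj y₀,
    interpolationMatrix.injective_fst hcol y₀, fun n => x n, hx,
    interpolationMatrix.tendsto_fst hx fun n => (x n).2⟩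

theorem statement14_general (Y : Type) [TopologicalSpace Y] [CompactSpace Y] [T2Space Y]
    [FirstCountableTopology Y] [ConnectedSpace Y] (hY : #Y ≤ 𝔠) :
    ∃ (T : Type) (_ : TopologicalSpace T), T1Space T ∧ CompletelyRegularSpace T ∧
      TotallySeparatedSpace T ∧ BaireSpace (Cp T Y) ∧ ¬ BaireSpace (Cp T Bool) := by
  obtain ⟨T, κ, Φ, hrows, hcols, hinj, x, hx, hlim⟩ := exists_interpolationMatrix Y hY
  let _ : TopologicalSpace T := .induced Φ inferInstance
  have hΦ : IsInducing Φ := ⟨rfl⟩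
  have hΦ_cont := hΦ.continuous
  have hsep : TotallySeparatedSpace T :=
    totallySeparatedSpace_of_continuous_injective (by fun_prop) hinj
  refine ⟨T, inferInstance, inferInstance, hΦ.completelyRegularSpace, hsep, ?_, ?_⟩
  · have hCp : MeetsCountableFaces (Subtype.val : Cp T Y → T → Y) := fun A hA p =>
      let ⟨k, hk⟩ := hcols A hA p
      ⟨⟨fun t => (Φ t k).2, by fun_prop⟩, hk⟩
    exact hCp.baireSpace .subtypeVal
  · refine not_baireSpace_Cp hx fun f => ?_
    obtain ⟨g, hg, hfg⟩ := hrows.exists_continuous_factorization_fst hΦ f.2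
    have hconv := (hg.tendsto _).comp hlim
    rw [nhds_discrete] at hconv
    exact eventuallyConst_iff_tendsto.2 ⟨_, hconv.congr fun n => (hfg (x n)).symm⟩

/-- There is a totally disconnected (totally separated) Tychonoff space `T` such that
`C_p(T, [0,1])` is a Baire space but `C_p(T, {0,1})` is not. Here `[0,1]` is the unit
interval and `{0,1}` the two-point discrete space, realized as `Bool`. -/
theorem statement14 :
    ∃ (T : Type) (_ : TopologicalSpace T), T1Space T ∧ CompletelyRegularSpace T ∧
      TotallySeparatedSpace T ∧
      BaireSpace (Cp T unitInterval) ∧ ¬ BaireSpace (Cp T Bool) :=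
  statement14_general unitInterval (mk_Icc_real zero_lt_one).le
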